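/- Let ρ and σ be finite positive Borel measures on ℝ with ρ absolutely continuous with respect to σ, and let M_ρ and M_σ denote their Borel transforms. Then for σ_s-almost every E ∈ ℝ, where σ_s is the part of σ singular with respect to Lebesgue measure, the ratio M_ρ(E + iε)/M_σ(E + iε) converges, as ε → 0⁺, to the Radon–Nikodym derivative (dρ/dσ)(E). -/

import Mathlib

open MeasureTheory Filter

open scoped ENNReal Topology

/-- The Poisson kernel of the upper half-plane, without the factor `1 / π`. -/
noncomputable def poissonHalfPlane (E ε x : ℝ) : ℝ := ε / ((x - E) ^ 2 + ε ^ 2)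

lemma poissonHalfPlane_nonneg {E ε : ℝ} (hε : 0 < ε) (x : ℝ) : 0 ≤ poissonHalfPlane E ε x := by
  unfold poissonHalfPlane; positivity

lemma poissonHalfPlane_le {E ε : ℝ} (hε : 0 < ε) (x : ℝ) : poissonHalfPlane E ε x ≤ 1 / ε := by
  unfold poissonHalfPlane
  rw [div_le_div_iff₀ (by positivity) hε]
  nlinarith [sq_nonneg (x - E)]

@[fun_prop]
lemma measurable_poissonHalfPlane (E ε : ℝ) : Measurable (poissonHalfPlane E ε) := by
  unfold poissonHalfPlane; fun_prop

lemma integrable_poissonHalfPlane (μ : Measure ℝ) [IsFiniteMeasure μ] (E : ℝ) {ε : ℝ}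
    (hε : 0 < ε) : Integrable (poissonHalfPlane E ε) μ := by
  refine Integrable.of_bound (measurable_poissonHalfPlane E ε).aestronglyMeasurable (1 / ε) ?_
  filter_upwards with x
  rw [Real.norm_of_nonneg (poissonHalfPlane_nonneg hε x)]
  exact poissonHalfPlane_le hε x

lemma setOf_le_poissonHalfPlane {E ε t : ℝ} (ht : 0 < t) (hε : 0 < ε) :
    {x | t ≤ poissonHalfPlane E ε x} = {x | (x - E) ^ 2 ≤ ε / t - ε ^ 2} := by
  ext x
  simp only [Set.mem_ofPred_eq, poissonHalfPlane]
  rw [le_div_iff₀ (by positivity), le_sub_iff_add_le, le_div_iff₀ ht, mul_comm]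

/-- Comparing two measures on small balls around `E` compares their Poisson integrals. -/
lemma lintegral_poissonHalfPlane_le (κ μ : Measure ℝ) {E δ ε : ℝ} (hδ : 0 < δ) (hε : 0 < ε)
    {c : ℝ≥0∞}
    (h : ∀ s ∈ Set.Ioo 0 δ, κ (Metric.closedBall E s) ≤ c * μ (Metric.closedBall E s)) :
    ∫⁻ x, ENNReal.ofReal (poissonHalfPlane E ε x) ∂κ ≤
      ENNReal.ofReal (ε / (δ ^ 2 + ε ^ 2)) * κ Set.univ +
        c * ∫⁻ x, ENNReal.ofReal (poissonHalfPlane E ε x) ∂μ := by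
  have hm : 0 ≤ ε / (δ ^ 2 + ε ^ 2) := by positivity
  have layer : ∀ ν : Measure ℝ, ∫⁻ x, ENNReal.ofReal (poissonHalfPlane E ε x) ∂ν =
      ∫⁻ t in Set.Ioi 0, ν {x | t ≤ poissonHalfPlane E ε x} := fun ν =>
    lintegral_eq_lintegral_meas_le ν (Eventually.of_forall (poissonHalfPlane_nonneg hε))
      (measurable_poissonHalfPlane E ε).aemeasurable
  have hmeas : Measurable fun t => μ {x | t ≤ poissonHalfPlane E ε x} :=
    Antitone.measurable fun s t hst => measure_mono fun x hx => hst.trans hx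
  rw [layer κ, layer μ, ← Set.Ioc_union_Ioi_eq_Ioi hm,
    lintegral_union measurableSet_Ioi
      (Set.Ioc_disjoint_Ioi le_rfl)]
  gcongr
  · calc ∫⁻ t in Set.Ioc 0 (ε / (δ ^ 2 + ε ^ 2)), κ {x | t ≤ poissonHalfPlane E ε x}
        ≤ ∫⁻ _ in Set.Ioc 0 (ε / (δ ^ 2 + ε ^ 2)), κ Set.univ :=
          lintegral_mono fun t => measure_mono (Set.subset_univ _)
      _ = _ := by
          rw [setLIntegral_const, Real.volume_Ioc, sub_zero, mul_comm]
  · rw [Set.Ioc_union_Ioi_eq_Ioi hm, ← lintegral_const_mul _ hmeas]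
    refine (lintegral_mono_ae ?_).trans (lintegral_mono_set (Set.Ioi_subset_Ioi hm))
    have hne : ∀ᵐ t : ℝ ∂volume.restrict (Set.Ioi (ε / (δ ^ 2 + ε ^ 2))), t ≠ 1 / ε :=
      ae_restrict_of_ae (by simp [ae_iff])
    filter_upwards [hne, ae_restrict_mem measurableSet_Ioi] with t hne ht
    have ht0 : 0 < t := hm.trans_lt ht
    rw [setOf_le_poissonHalfPlane ht0 hε]
    have hq : ε / t - ε ^ 2 < δ ^ 2 := by
      have := (div_lt_iff₀ (by positivity)).1 (Set.mem_Ioi.1 ht)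
      rw [sub_lt_iff_lt_add, div_lt_iff₀ ht0]
      linarith
    rcases lt_trichotomy (ε / t - ε ^ 2) 0 with h0 | h0 | h0
    · have : {x : ℝ | (x - E) ^ 2 ≤ ε / t - ε ^ 2} = ∅ := by
        ext x
        simpa using h0.trans_le (sq_nonneg _)
      simp [this]
    · exfalso
      apply hne
      field_simp at h0 ⊢
      nlinarith
    · have : {x : ℝ | (x - E) ^ 2 ≤ ε / t - ε ^ 2} =
          Metric.closedBall E √(ε / t - ε ^ 2) := by
        ext x
        rw [Set.mem_ofPred_eq, Metric.mem_closedBall, Real.dist_eq, ← Real.sqrt_sq_eq_abs,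
          Real.sqrt_le_sqrt_iff h0.le]
      rw [this]
      exact h _ ⟨Real.sqrt_pos.2 h0, (Real.sqrt_lt' hδ).2 hq⟩

lemma ofReal_integral_poissonHalfPlane (μ : Measure ℝ) [IsFiniteMeasure μ] (E : ℝ) {ε : ℝ}
    (hε : 0 < ε) : ENNReal.ofReal (∫ x, poissonHalfPlane E ε x ∂μ) =
      ∫⁻ x, ENNReal.ofReal (poissonHalfPlane E ε x) ∂μ :=
  ofReal_integral_eq_lintegral_ofReal (integrable_poissonHalfPlane μ E hε)
    (Eventually.of_forall (poissonHalfPlane_nonneg hε))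

/-- The Poisson integral of `μ` blows up at `μ`-almost every point of a Lebesgue null set. -/
lemma ae_tendsto_integral_poissonHalfPlane_atTop (μ : Measure ℝ) [IsFiniteMeasure μ] {N : Set ℝ}
    (hN : volume N = 0) : ∀ᵐ E ∂μ.restrict N,
      Tendsto (fun ε => ∫ x, poissonHalfPlane E ε x ∂μ) (𝓝[>] 0) atTop := by
  have h0 : ∀ᵐ E ∂μ.restrict N, (volume : Measure ℝ).rnDeriv μ E = 0 := by
    refine (lintegral_eq_zero_iff (Measure.measurable_rnDeriv _ _)).1 ?_
    exact le_antisymm ((Measure.setLIntegral_rnDeriv_le N).trans hN.le) zero_le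
  filter_upwards [h0, ae_restrict_of_ae (Besicovitch.ae_tendsto_rnDeriv volume μ)] with E hE hlim
  rw [hE] at hlim
  have hinv := tendsto_inv_iff.2 hlim
  rw [ENNReal.inv_zero] at hinv
  rw [tendsto_atTop]
  intro b
  have hev := hinv.eventually (lt_mem_nhds (ENNReal.ofReal_lt_top (r := max b 0)))
  filter_upwards [hev, self_mem_nhdsWithin] with ε hb hε
  rw [Set.mem_Ioi] at hε
  have key : μ (Metric.closedBall E ε) / volume (Metric.closedBall E ε) ≤
      ENNReal.ofReal (∫ x, poissonHalfPlane E ε x ∂μ) := by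
    rw [Real.volume_closedBall, ofReal_integral_poissonHalfPlane μ E hε]
    calc μ (Metric.closedBall E ε) / ENNReal.ofReal (2 * ε)
        = ∫⁻ _ in Metric.closedBall E ε, ENNReal.ofReal (1 / (2 * ε)) ∂μ := by
          rw [setLIntegral_const, one_div, ENNReal.ofReal_inv_of_pos (by positivity), mul_comm,
            ENNReal.div_eq_inv_mul]
      _ ≤ ∫⁻ x in Metric.closedBall E ε, ENNReal.ofReal (poissonHalfPlane E ε x) ∂μ := by
          refine setLIntegral_mono (by fun_prop) fun x hx => ENNReal.ofReal_le_ofReal ?_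
          rw [Metric.mem_closedBall, Real.dist_eq] at hx
          have : (x - E) ^ 2 ≤ ε ^ 2 := sq_le_sq' (abs_le.1 hx).1 (abs_le.1 hx).2
          unfold poissonHalfPlane
          rw [div_le_div_iff₀ (by positivity) (by positivity)]
          nlinarith
      _ ≤ _ := setLIntegral_le_lintegral _ _
  rw [ENNReal.inv_div (Or.inr (by rw [Real.volume_closedBall]; exact ENNReal.ofReal_ne_top))
    (Or.inr (by rw [Real.volume_closedBall]; simpa using hε))] at hb
  have := (hb.trans_le key).le
  rw [ENNReal.ofReal_le_ofReal_iff
    (integral_nonneg (poissonHalfPlane_nonneg hε))] at this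
  exact (le_max_left _ _).trans this

/-- Upper bound in the Fatou theorem for ratios of Poisson integrals. -/
lemma ae_eventually_integral_poissonHalfPlane_le (κ μ : Measure ℝ) [IsFiniteMeasure κ]
    [IsFiniteMeasure μ] {N : Set ℝ} (hN : volume N = 0) :
    ∀ᵐ E ∂μ.restrict N, ∀ c : ℝ, κ.rnDeriv μ E < ENNReal.ofReal c →
      ∀ᶠ ε in 𝓝[>] 0, ∫ x, poissonHalfPlane E ε x ∂κ ≤ c * ∫ x, poissonHalfPlane E ε x ∂μ := by
  filter_upwards [ae_tendsto_integral_poissonHalfPlane_atTop μ hN,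
    ae_restrict_of_ae (Besicovitch.ae_tendsto_rnDeriv κ μ)] with E htop hlim c hc
  obtain ⟨c', hc'1, hc'2⟩ := exists_between hc
  lift c' to NNReal using (hc'2.trans_le le_top).ne
  have hcc : (c' : ℝ) < c := by
    rw [← ENNReal.ofReal_coe_nnreal] at hc'2
    exact (ENNReal.ofReal_lt_ofReal_iff_of_nonneg c'.coe_nonneg).1 hc'2
  obtain ⟨δ, hδ, hball⟩ := mem_nhdsGT_iff_exists_Ioo_subset.1
    (hlim.eventually (gt_mem_nhds hc'1))
  rw [Set.mem_Ioi] at hδ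
  have hb : ∀ s ∈ Set.Ioo 0 δ,
      κ (Metric.closedBall E s) ≤ c' * μ (Metric.closedBall E s) := fun s hs =>
    (ENNReal.div_le_iff_le_mul (Or.inr ENNReal.coe_ne_top) (Or.inl (measure_ne_top _ _))).1
      (hball hs).le
  have hlarge := htop.eventually_ge_atTop (κ.real Set.univ / δ ^ 2 / (c - c'))
  filter_upwards [hlarge, self_mem_nhdsWithin, Ioo_mem_nhdsGT zero_lt_one] with ε h1 hε hε1
  rw [Set.mem_Ioi] at hε
  have := lintegral_poissonHalfPlane_le κ μ hδ hε hb
  rw [← ofReal_integral_poissonHalfPlane κ E hε, ← ofReal_integral_poissonHalfPlane μ E hε,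
    ← ENNReal.ofReal_coe_nnreal, ← ofReal_measureReal, ← ENNReal.ofReal_mul (by positivity),
    ← ENNReal.ofReal_mul c'.coe_nonneg, ← ENNReal.ofReal_add (by positivity)
      (mul_nonneg c'.coe_nonneg (integral_nonneg (poissonHalfPlane_nonneg hε))),
    ENNReal.ofReal_le_ofReal_iff (add_nonneg (by positivity)
      (mul_nonneg c'.coe_nonneg (integral_nonneg (poissonHalfPlane_nonneg hε))))] at this
  have h2 : ε / (δ ^ 2 + ε ^ 2) * κ.real Set.univ ≤ κ.real Set.univ / δ ^ 2 := by
    rw [div_mul_eq_mul_div]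
    have := measureReal_nonneg (μ := κ) (s := Set.univ)
    gcongr
    · nlinarith [hε1.2]
    · nlinarith
  rw [div_le_iff₀ (by linarith)] at h1
  linarith

/-- **Herglotz representation** on the unit disc: the imaginary part of a holomorphic function
with values in the closed upper half-plane is the Poisson integral of a measure on the circle,
parametrised by the angle. -/
lemma exists_measure_im_eq_integral_poissonKernel {F : ℂ → ℂ}
    (hF : DifferentiableOn ℂ F (Metric.ball 0 1))
    (hpos : ∀ w ∈ Metric.ball (0 : ℂ) 1, 0 ≤ (F w).im) :
    ∃ ν : Measure ℝ, ν Set.univ ≤ ENNReal.ofReal (F 0).im ∧ ∀ w ∈ Metric.ball (0 : ℂ) 1,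
      (F w).im = ∫ θ, poissonKernel 0 w (circleMap 0 1 θ) ∂ν := by
  have hker : ∀ w ∈ Metric.ball (0 : ℂ) 1,
      Continuous fun θ => poissonKernel 0 w (circleMap 0 1 θ) := by
    intro w hw
    simp only [poissonKernel_def, sub_zero]
    refine Continuous.div (by fun_prop) (by fun_prop) fun θ h => ?_
    have : circleMap 0 1 θ = w := by simpa [sub_eq_zero] using h
    have h1 : ‖circleMap 0 1 θ‖ = 1 := by simp
    rw [this] at h1
    simp [h1] at hw
  have hstep : ∀ r ∈ Set.Ioo (0 : ℝ) 1, ∃ ν : FiniteMeasure ℝ,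
      ν ∈ {ν : FiniteMeasure ℝ | ν.mass ≤ (F 0).im.toNNReal ∧ ν (Set.Icc 0 (2 * Real.pi))ᶜ = 0} ∧
      ∀ w ∈ Metric.ball (0 : ℂ) 1,
        ∫ θ, poissonKernel 0 w (circleMap 0 1 θ) ∂(ν : Measure ℝ) = (F (r * w)).im := by
    intro r hr
    have hball : ∀ w : ℂ, ‖w‖ ≤ 1 → (r : ℂ) * w ∈ Metric.ball (0 : ℂ) 1 := by
      intro w hw
      rw [mem_ball_zero_iff, norm_mul, Complex.norm_real, Real.norm_of_nonneg hr.1.le]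
      nlinarith [hr.1, hr.2]
    have hd : DiffContOnCl ℂ (fun w => F (r * w)) (Metric.ball 0 1) := by
      refine DifferentiableOn.diffContOnCl ?_
      rw [closure_ball _ one_ne_zero]
      exact hF.comp (by fun_prop) fun w hw => hball w (by simpa using hw)
    set d : ℝ → ℝ := fun θ => (2 * Real.pi)⁻¹ * (F (r * circleMap 0 1 θ)).im with hd_def
    have hdc : Continuous d := by
      refine continuous_const.mul (Complex.continuous_im.comp ?_)
      exact hF.continuousOn.comp_continuous (by fun_prop) fun θ => hball _ (by simp)
    have hd0 : ∀ θ, 0 ≤ d θ := fun θ =>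
      mul_nonneg (by positivity) (hpos _ (hball _ (by simp)))
    set m : Measure ℝ := (volume.restrict (Set.Ioc 0 (2 * Real.pi))).withDensity
      fun θ => ENNReal.ofReal (d θ) with hm
    have hint : ∀ w ∈ Metric.ball (0 : ℂ) 1,
        ∫ θ, poissonKernel 0 w (circleMap 0 1 θ) ∂m = (F (r * w)).im := by
      intro w hw
      have h1 := hd.circleAverage_poissonKernel_smul hw
      have h2 : CircleIntegrable (poissonKernel 0 w • fun w => F (r * w)) 0 1 := by
        refine Continuous.intervalIntegrable ?_ _ _
        refine (hker w hw).smul ?_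
        exact hF.continuousOn.comp_continuous (by fun_prop) fun θ => hball _ (by simp)
      rw [← h1, ← Complex.imCLM_apply, ← Complex.imCLM.circleAverage_comp_comm h2,
        Real.circleAverage_def, intervalIntegral.integral_of_le Real.two_pi_pos.le, hm,
        integral_withDensity_eq_integral_toReal_smul (by fun_prop) (by simp), smul_eq_mul,
        ← integral_const_mul]
      refine integral_congr_ae (Eventually.of_forall fun θ => ?_)
      simp only [smul_eq_mul, Function.comp_apply, Pi.smul_apply', Complex.imCLM_apply,
        Complex.smul_im, ENNReal.toReal_ofReal (hd0 θ)]
      simp only [hd_def]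
      ring
    have hfin : IsFiniteMeasure m := by
      refine isFiniteMeasure_withDensity_ofReal ?_
      exact ((hdc.integrableOn_Icc).mono_set Set.Ioc_subset_Icc_self).2
    let m' : FiniteMeasure ℝ := ⟨m, hfin⟩
    refine ⟨m', ⟨?_, ?_⟩, hint⟩
    · have := hint 0 (by simp)
      simp only [poissonKernel_def, sub_zero, norm_zero, norm_circleMap_zero] at this
      simp at this
      have hm' : ((m'.mass : NNReal) : ℝ) = (F 0).im := this
      rw [← hm', Real.toNNReal_coe]
    · rw [FiniteMeasure.null_iff_toMeasure_null]
      refine withDensity_absolutelyContinuous (volume.restrict (Set.Ioc 0 (2 * Real.pi))) _ ?_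
      rw [Measure.restrict_apply measurableSet_Icc.compl]
      have hempty : (Set.Icc 0 (2 * Real.pi))ᶜ ∩ Set.Ioc 0 (2 * Real.pi) = ∅ := by
        rw [← Set.disjoint_iff_inter_eq_empty, Set.disjoint_compl_left_iff_subset]
        exact Set.Ioc_subset_Icc_self
      rw [hempty, measure_empty]
  choose! ν hν hνint using hstep
  have hev : ∀ᶠ r in 𝓝[<] (1 : ℝ), r ∈ Set.Ioo (0 : ℝ) 1 := Ioo_mem_nhdsLT zero_lt_one
  have hU : (Ultrafilter.of (𝓝[<] (1 : ℝ)) : Filter ℝ) ≤ 𝓝[<] 1 := Ultrafilter.of_le _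
  obtain ⟨ν₀, hν₀, hlim⟩ := (isCompact_setOfPred_finiteMeasure_le_of_isCompact (F 0).im.toNNReal
    (isCompact_Icc (a := 0) (b := 2 * Real.pi))).ultrafilter_le_nhds
      ((Ultrafilter.of (𝓝[<] (1 : ℝ))).map ν)
      (le_principal_iff.2 (hU (hev.mono fun r hr => hν r hr)))
  refine ⟨ν₀, ?_, fun w hw => ?_⟩
  · have := ENNReal.coe_le_coe.2 hν₀.1
    rwa [FiniteMeasure.ennreal_mass] at this
  · have hw1 : ‖w‖ < 1 := by simpa using hw
    have hbd : ∃ C, ∀ θ, ‖poissonKernel 0 w (circleMap 0 1 θ)‖ ≤ C := by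
      refine ⟨(1 - ‖w‖ ^ 2) / (1 - ‖w‖) ^ 2, fun θ => ?_⟩
      simp only [poissonKernel_def, sub_zero, norm_circleMap_zero, abs_one, one_pow]
      have h1 : 1 - ‖w‖ ≤ ‖circleMap 0 1 θ - w‖ := by
        simpa using norm_sub_norm_le (circleMap 0 1 θ) w
      have h2 : 0 ≤ 1 - ‖w‖ ^ 2 := by nlinarith [norm_nonneg w]
      rw [Real.norm_of_nonneg (by positivity)]
      gcongr
    obtain ⟨C, hC⟩ := hbd
    have h1 := (FiniteMeasure.tendsto_iff_forall_integral_tendsto.1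
      (show Tendsto ν (Ultrafilter.of (𝓝[<] (1 : ℝ))) (𝓝 ν₀) from hlim))
        (BoundedContinuousFunction.ofNormedAddCommGroup _ (hker w hw) C hC)
    have h2 : Tendsto (fun r : ℝ => (F (r * w)).im) (𝓝[<] 1) (𝓝 (F w).im) := by
      have hc : ContinuousAt (fun r : ℝ => (F (r * w)).im) 1 := by
        refine Complex.continuous_im.continuousAt.comp ?_
        refine ContinuousAt.comp (g := F) ?_ (by fun_prop)
        rw [Complex.ofReal_one, one_mul]
        exact (hF.differentiableAt (Metric.isOpen_ball.mem_nhds hw)).continuousAt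
      simpa using hc.tendsto.mono_left nhdsWithin_le_nhds
    refine tendsto_nhds_unique (h2.mono_left hU) (h1.congr' ?_)
    exact hU (hev.mono fun r hr => hνint r hr w hw)

/-- The point of the real line which the Cayley transform sends to `exp (θ * I)`. -/
noncomputable def cayleyAngle (θ : ℝ) : ℝ := -Real.sin θ / (1 - Real.cos θ)

@[fun_prop]
lemma measurable_cayleyAngle : Measurable cayleyAngle := by
  unfold cayleyAngle; fun_prop

lemma circleMap_mul_cayleyAngle_add_I {θ : ℝ} (hθ : Real.cos θ ≠ 1) :
    circleMap 0 1 θ * (cayleyAngle θ + Complex.I) = cayleyAngle θ - Complex.I := by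
  have h1 : 1 - Real.cos θ ≠ 0 := sub_ne_zero.2 (Ne.symm hθ)
  have h2 := Real.sin_sq_add_cos_sq θ
  have h3 : circleMap 0 1 θ = Real.cos θ + Real.sin θ * Complex.I := by
    simp [circleMap, Complex.exp_mul_I]
  have h4 : cayleyAngle θ * (1 - Real.cos θ) = -Real.sin θ := div_mul_cancel₀ _ h1
  have h5 : Real.cos θ + Real.sin θ * cayleyAngle θ = -1 := by
    refine mul_right_cancel₀ h1 ?_
    linear_combination Real.sin θ * h4 - h2
  rw [h3]
  apply Complex.ext
  · simp [-Complex.ofReal_cos, -Complex.ofReal_sin]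
    linarith
  · simp [-Complex.ofReal_cos, -Complex.ofReal_sin]
    linarith

lemma poissonKernel_cayley_le (E : ℝ) {ε : ℝ} (hε : 0 < ε) (θ : ℝ) :
    poissonKernel 0 ((E + ε * Complex.I - Complex.I) / (E + ε * Complex.I + Complex.I))
        (circleMap 0 1 θ) ≤
      (1 + 2 * E ^ 2) * poissonHalfPlane E ε (cayleyAngle θ) + 2 * ε := by
  set z : ℂ := E + ε * Complex.I with hz
  have hzI : z + Complex.I ≠ 0 := by
    intro h
    have := congrArg Complex.im h
    simp [hz] at this
    linarith
  have hzI' : ‖z + Complex.I‖ ^ 2 = E ^ 2 + (ε + 1) ^ 2 := by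
    rw [← Complex.normSq_eq_norm_sq, Complex.normSq_apply]; simp [hz]; ring
  have hnum : 1 - ‖(z - Complex.I) / (z + Complex.I)‖ ^ 2 = 4 * ε / ‖z + Complex.I‖ ^ 2 := by
    have h0 : ‖z - Complex.I‖ ^ 2 = E ^ 2 + (ε - 1) ^ 2 := by
      rw [← Complex.normSq_eq_norm_sq, Complex.normSq_apply]; simp [hz]; ring
    rw [norm_div, div_pow, h0, hzI']
    have : E ^ 2 + (ε + 1) ^ 2 ≠ 0 := by positivity
    field_simp
    ring
  have hp : 0 < ‖z + Complex.I‖ := norm_pos_iff.2 hzI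
  simp only [poissonKernel_def, sub_zero, norm_circleMap_zero, abs_one, one_pow]
  rw [hnum]
  by_cases hθ : Real.cos θ = 1
  · have h3 : circleMap 0 1 θ = 1 := by
      have : Real.sin θ = 0 := by
        have := Real.sin_sq_add_cos_sq θ
        rw [hθ] at this
        nlinarith
      simp [circleMap, Complex.exp_mul_I, ← Complex.ofReal_cos, ← Complex.ofReal_sin, hθ, this]
    have h4 : (1 : ℂ) - (z - Complex.I) / (z + Complex.I) = 2 * Complex.I / (z + Complex.I) := by
      field_simp
      ring
    rw [h3, h4, norm_div, div_pow]
    have h5 : ‖2 * Complex.I‖ ^ 2 = 4 := by norm_num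
    rw [h5]
    have h6 : 4 * ε / ‖z + Complex.I‖ ^ 2 / (4 / ‖z + Complex.I‖ ^ 2) = ε := by
      field_simp
    rw [h6]
    have := poissonHalfPlane_nonneg (E := E) hε (cayleyAngle θ)
    have := mul_nonneg (by positivity : 0 ≤ 1 + 2 * E ^ 2) this
    linarith
  · set t := cayleyAngle θ with ht
    have htI : (t : ℂ) + Complex.I ≠ 0 := by
      intro h
      have := congrArg Complex.im h
      simp at this
    have h3 : circleMap 0 1 θ = (t - Complex.I) / (t + Complex.I) := by
      rw [eq_div_iff htI]
      exact circleMap_mul_cayleyAngle_add_I hθ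
    have h4 : circleMap 0 1 θ - (z - Complex.I) / (z + Complex.I) =
        2 * Complex.I * (t - z) / ((t + Complex.I) * (z + Complex.I)) := by
      rw [h3]
      field_simp
      ring
    have h5 : ‖(t : ℂ) - z‖ ^ 2 = (t - E) ^ 2 + ε ^ 2 := by
      rw [← Complex.normSq_eq_norm_sq, Complex.normSq_apply]; simp [hz]; ring
    have h6 : ‖(t : ℂ) + Complex.I‖ ^ 2 = t ^ 2 + 1 := by
      rw [← Complex.normSq_eq_norm_sq, Complex.normSq_apply]; simp; ring
    have h7 : ‖2 * Complex.I‖ ^ 2 = 4 := by norm_num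
    rw [h4, norm_div, norm_mul (2 * Complex.I), norm_mul (t + Complex.I), div_pow, mul_pow, mul_pow,
      h5, h6, h7]
    have h8 : 4 * ε / ‖z + Complex.I‖ ^ 2 /
        (4 * ((t - E) ^ 2 + ε ^ 2) / ((t ^ 2 + 1) * ‖z + Complex.I‖ ^ 2)) =
        ε * (t ^ 2 + 1) / ((t - E) ^ 2 + ε ^ 2) := by
      have : (t - E) ^ 2 + ε ^ 2 ≠ 0 := by positivity
      field_simp
    rw [h8, poissonHalfPlane, mul_div_assoc', div_add' _ _ _ (by positivity)]
    gcongr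
    have : t ^ 2 + 1 ≤ 1 + 2 * E ^ 2 + 2 * ((t - E) ^ 2 + ε ^ 2) := by
      nlinarith [sq_nonneg (t - 2 * E), sq_nonneg ε]
    nlinarith

/-- The imaginary part of a Herglotz function is dominated by the Poisson integral of a measure,
locally uniformly and up to a term which vanishes at the real line. -/
lemma exists_measure_im_le_integral_poissonHalfPlane {G : ℂ → ℂ}
    (hG : DifferentiableOn ℂ G {z | 0 < z.im}) (hpos : ∀ z : ℂ, 0 < z.im → 0 ≤ (G z).im) :
    ∃ κ : Measure ℝ, κ Set.univ ≤ ENNReal.ofReal (G Complex.I).im ∧ ∀ E ε : ℝ, 0 < ε →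
      (G (E + ε * Complex.I)).im ≤
        (1 + 2 * E ^ 2) * ∫ x, poissonHalfPlane E ε x ∂κ + 2 * ε * (G Complex.I).im := by
  set φ : ℂ → ℂ := fun w => Complex.I * (1 + w) / (1 - w) with hφ
  have hne : ∀ w ∈ Metric.ball (0 : ℂ) 1, 1 - w ≠ 0 := by
    intro w hw h
    rw [← sub_eq_zero.1 h] at hw
    simp at hw
  have hφim : ∀ w ∈ Metric.ball (0 : ℂ) 1, 0 < (φ w).im := by
    intro w hw
    have h1 : ‖w‖ < 1 := by simpa using hw
    have h2 : w.re ^ 2 + w.im ^ 2 = ‖w‖ ^ 2 := by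
      rw [← Complex.normSq_eq_norm_sq, Complex.normSq_apply]; ring
    have h3 : 0 < Complex.normSq (1 - w) := Complex.normSq_pos.2 (hne w hw)
    have h4 : (φ w).im = (1 - ‖w‖ ^ 2) / Complex.normSq (1 - w) := by
      rw [← h2]
      simp [hφ, Complex.div_im]
      field_simp
      ring
    rw [h4]
    exact div_pos (by nlinarith [norm_nonneg w]) h3
  obtain ⟨ν, hν, hint⟩ := exists_measure_im_eq_integral_poissonKernel (F := G ∘ φ)
    (hG.comp (by
      refine DifferentiableOn.div (by fun_prop) (by fun_prop) hne) hφim)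
    fun w hw => hpos _ (hφim w hw)
  have hφ0 : (G ∘ φ) 0 = G Complex.I := by simp [hφ]
  rw [hφ0] at hν
  have : IsFiniteMeasure ν := ⟨hν.trans_lt ENNReal.ofReal_lt_top⟩
  have hG0 := hpos Complex.I (by simp)
  refine ⟨ν.map cayleyAngle, ?_, fun E ε hε => ?_⟩
  · rwa [Measure.map_apply (by fun_prop) MeasurableSet.univ, Set.preimage_univ]
  set z : ℂ := E + ε * Complex.I with hz
  have hzI : z + Complex.I ≠ 0 := by
    intro h
    have := congrArg Complex.im h
    simp [hz] at this
    linarith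
  have hw : (z - Complex.I) / (z + Complex.I) ∈ Metric.ball (0 : ℂ) 1 := by
    rw [mem_ball_zero_iff, norm_div, div_lt_one (norm_pos_iff.2 hzI)]
    rw [← sq_lt_sq₀ (norm_nonneg _) (norm_nonneg _), ← Complex.normSq_eq_norm_sq,
      ← Complex.normSq_eq_norm_sq, Complex.normSq_apply, Complex.normSq_apply]
    simp [hz]
    nlinarith
  have hφw : φ ((z - Complex.I) / (z + Complex.I)) = z := by
    have h1 := hne _ hw
    simp only [hφ]
    rw [div_eq_iff h1]
    field_simp
    ring_nf
  have h1 := hint _ hw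
  rw [Function.comp_apply, hφw] at h1
  rw [h1, integral_map (by fun_prop) (by fun_prop)]
  have hi : Integrable (fun θ => poissonHalfPlane E ε (cayleyAngle θ)) ν :=
    (integrable_poissonHalfPlane (ν.map cayleyAngle) E hε).comp_measurable (by fun_prop)
  calc ∫ θ, poissonKernel 0 ((z - Complex.I) / (z + Complex.I)) (circleMap 0 1 θ) ∂ν
      ≤ ∫ θ, ((1 + 2 * E ^ 2) * poissonHalfPlane E ε (cayleyAngle θ) + 2 * ε) ∂ν := by
        refine integral_mono_of_nonneg (Eventually.of_forall fun θ => ?_)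
          ((hi.const_mul _).add (integrable_const _))
          (Eventually.of_forall fun θ => poissonKernel_cayley_le E hε θ)
        simp only [poissonKernel_def, sub_zero, norm_circleMap_zero, abs_one, one_pow,
          Pi.zero_apply]
        have : ‖(z - Complex.I) / (z + Complex.I)‖ < 1 := by simpa using hw
        exact div_nonneg (by nlinarith [norm_nonneg ((z - Complex.I) / (z + Complex.I))])
          (by positivity)
    _ = (1 + 2 * E ^ 2) * ∫ θ, poissonHalfPlane E ε (cayleyAngle θ) ∂ν +
          ν.real Set.univ * (2 * ε) := by
        rw [integral_add (hi.const_mul _) (integrable_const _), integral_const_mul,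
          integral_const, smul_eq_mul]
    _ ≤ _ := by
        have : ν.real Set.univ ≤ (G Complex.I).im := ENNReal.toReal_le_of_le_ofReal hG0 hν
        nlinarith

/-- The Borel transform of the real measure `f μ`. -/
noncomputable def borelTransform (μ : Measure ℝ) (f : ℝ → ℝ) (z : ℂ) : ℂ :=
  ∫ x, (f x : ℂ) * ((x : ℂ) - z)⁻¹ ∂μ

lemma norm_inv_ofReal_sub_le {z : ℂ} {c : ℝ} (hc : 0 < c) (hz : c ≤ z.im) (x : ℝ) :
    ‖((x : ℂ) - z)⁻¹‖ ≤ c⁻¹ := by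
  rw [norm_inv]
  gcongr
  have := Complex.abs_im_le_norm ((x : ℂ) - z)
  simp only [Complex.sub_im, Complex.ofReal_im, zero_sub, abs_neg] at this
  exact hz.trans ((le_abs_self _).trans this)

lemma integrable_borelTransform (μ : Measure ℝ) [IsFiniteMeasure μ] {f : ℝ → ℝ}
    (hf : Integrable f μ) {z : ℂ} (hz : 0 < z.im) :
    Integrable (fun x : ℝ => (f x : ℂ) * ((x : ℂ) - z)⁻¹) μ :=
  hf.ofReal.mul_bdd (c := z.im⁻¹) (by fun_prop)
    (Eventually.of_forall fun x => norm_inv_ofReal_sub_le hz le_rfl x)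

lemma differentiableOn_borelTransform (μ : Measure ℝ) [IsFiniteMeasure μ] {f : ℝ → ℝ}
    (hf : Integrable f μ) :
    DifferentiableOn ℂ (borelTransform μ f) {z | 0 < z.im} := by
  intro z hz
  rw [Set.mem_ofPred_eq] at hz
  have hs : {w : ℂ | z.im / 2 < w.im} ∈ 𝓝 z :=
    (isOpen_lt continuous_const Complex.continuous_im).mem_nhds (half_lt_self hz)
  have hz2 : 0 < z.im / 2 := half_pos hz
  refine ((hasDerivAt_integral_of_dominated_loc_of_deriv_le
    (F := fun (w : ℂ) (x : ℝ) => (f x : ℂ) * ((x : ℂ) - w)⁻¹)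
    (F' := fun (w : ℂ) (x : ℝ) => (f x : ℂ) * (((x : ℂ) - w)⁻¹) ^ 2)
    (bound := fun x => ‖f x‖ * ((z.im / 2)⁻¹) ^ 2)
    hs ?_ ?_ ?_ ?_ ?_ ?_).2).differentiableAt.differentiableWithinAt
  · exact Eventually.of_forall fun w =>
      hf.ofReal.aestronglyMeasurable.mul (by fun_prop)
  · exact integrable_borelTransform μ hf hz
  · exact hf.ofReal.aestronglyMeasurable.mul (by fun_prop)
  · refine Eventually.of_forall fun x w hw => ?_
    rw [norm_mul, norm_pow, Complex.norm_real]
    gcongr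
    exact norm_inv_ofReal_sub_le hz2 (le_of_lt hw) x
  · exact hf.norm.mul_const _
  · refine Eventually.of_forall fun x w hw => ?_
    have hne : (x : ℂ) - w ≠ 0 := by
      intro h
      have h1 := congrArg Complex.im h
      have h2 : z.im / 2 < w.im := hw
      simp at h1
      linarith
    have := (((hasDerivAt_id w).const_sub (x : ℂ)).inv hne).const_mul (f x : ℂ)
    convert! this using 1
    simp [field]

lemma im_borelTransform (μ : Measure ℝ) [IsFiniteMeasure μ] {f : ℝ → ℝ}
    (hf : Integrable f μ) (E : ℝ) {ε : ℝ} (hε : 0 < ε) :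
    (borelTransform μ f (E + ε * Complex.I)).im = ∫ x, f x * poissonHalfPlane E ε x ∂μ := by
  rw [borelTransform, ← Complex.imCLM_apply, ← ContinuousLinearMap.integral_comp_comm _
    (integrable_borelTransform μ hf (by simpa using hε))]
  refine integral_congr_ae (Eventually.of_forall fun x => ?_)
  simp [poissonHalfPlane, Complex.inv_im, Complex.normSq_apply]
  left
  ring

lemma im_borelTransform_one (μ : Measure ℝ) [IsFiniteMeasure μ] (E : ℝ) {ε : ℝ} (hε : 0 < ε) :
    (borelTransform μ (fun _ => 1) (E + ε * Complex.I)).im = ∫ x, poissonHalfPlane E ε x ∂μ := by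
  simp [im_borelTransform μ (integrable_const 1) E hε]

lemma integral_poissonHalfPlane_pos (μ : Measure ℝ) [IsFiniteMeasure μ] [NeZero μ] (E : ℝ)
    {ε : ℝ} (hε : 0 < ε) : 0 < ∫ x, poissonHalfPlane E ε x ∂μ := by
  rw [integral_pos_iff_support_of_nonneg (poissonHalfPlane_nonneg hε)
    (integrable_poissonHalfPlane μ E hε)]
  have : Function.support (poissonHalfPlane E ε) = Set.univ := by
    ext x
    simp only [Function.mem_support, Set.mem_univ, iff_true]
    unfold poissonHalfPlane
    positivity
  rw [this]
  exact NeZero.pos _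

/-- A Herglotz function whose imaginary part controls the ratio of Borel transforms. -/
lemma norm_sq_borelTransform_div_le (μ : Measure ℝ) [IsFiniteMeasure μ] [NeZero μ] {r : ℝ → ℝ}
    (hr : MemLp r 2 μ) (E : ℝ) {ε : ℝ} (hε : 0 < ε) :
    ‖borelTransform μ r (E + ε * Complex.I) /
        borelTransform μ (fun _ => 1) (E + ε * Complex.I)‖ ^ 2 *
        ∫ x, poissonHalfPlane E ε x ∂μ ≤
      2 * (2 * borelTransform μ (fun x => r x ^ 2) (E + ε * Complex.I) -
        borelTransform μ r (E + ε * Complex.I) ^ 2 /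
          borelTransform μ (fun _ => 1) (E + ε * Complex.I)).im := by
  have hr1 : Integrable r μ := hr.integrable (by norm_num)
  have hr2 : Integrable (fun x => r x ^ 2) μ := hr.integrable_sq
  have hS := im_borelTransform_one μ E hε
  have hB := im_borelTransform μ hr1 E hε
  have hA := im_borelTransform μ hr2 E hε
  have hpos := integral_poissonHalfPlane_pos μ E hε
  set z : ℂ := E + ε * Complex.I
  set F := borelTransform μ (fun _ => 1) z
  set Fr := borelTransform μ r z
  have hF : F ≠ 0 := by
    intro h
    rw [h, Complex.zero_im] at hS
    exact hpos.ne hS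
  set h := Fr / F with hh
  have hFr : Fr = h * F := (div_mul_cancel₀ _ hF).symm
  have hsq : Fr ^ 2 / F = h ^ 2 * F := by
    rw [hFr]
    field_simp
  have hpb : ∀ᵐ x ∂μ, ‖poissonHalfPlane E ε x‖ ≤ 1 / ε := Eventually.of_forall fun x => by
    rw [Real.norm_of_nonneg (poissonHalfPlane_nonneg hε x)]
    exact poissonHalfPlane_le hε x
  have hpm := (measurable_poissonHalfPlane E ε).aestronglyMeasurable (μ := μ)
  have i1 : Integrable (fun x => r x * poissonHalfPlane E ε x) μ := hr1.mul_bdd hpm hpb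
  have i2 : Integrable (fun x => r x ^ 2 * poissonHalfPlane E ε x) μ := hr2.mul_bdd hpm hpb
  have i3 : Integrable (fun x => 4 * (r x ^ 2 * poissonHalfPlane E ε x) -
      4 * h.re * (r x * poissonHalfPlane E ε x)) μ := (i2.const_mul _).sub (i1.const_mul _)
  have hCS : 0 ≤ 4 * ∫ x, r x ^ 2 * poissonHalfPlane E ε x ∂μ -
      4 * h.re * ∫ x, r x * poissonHalfPlane E ε x ∂μ +
      h.re ^ 2 * ∫ x, poissonHalfPlane E ε x ∂μ := by
    rw [← integral_const_mul, ← integral_const_mul, ← integral_const_mul,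
      ← integral_sub (i2.const_mul _) (i1.const_mul _),
      ← integral_add i3 ((integrable_poissonHalfPlane μ E hε).const_mul _)]
    refine integral_nonneg fun x => ?_
    have := mul_nonneg (sq_nonneg (2 * r x - h.re)) (poissonHalfPlane_nonneg (E := E) hε x)
    simp only [Pi.zero_apply]
    linarith
  rw [← hA, ← hB, ← hS, hFr] at hCS
  have hn : ‖h‖ ^ 2 = h.re ^ 2 + h.im ^ 2 := by
    rw [← Complex.normSq_eq_norm_sq, Complex.normSq_apply]; ring
  rw [hsq, hn, ← hS]
  rw [← hS] at hpos
  simp only [pow_two, Complex.sub_im, Complex.mul_im, Complex.mul_re, Complex.re_ofNat,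
    Complex.im_ofNat] at hCS ⊢
  nlinarith [mul_nonneg (sq_nonneg h.im) hpos.le]

/-- For a Lipschitz density the convergence holds wherever the Borel transform blows up. -/
lemma tendsto_borelTransform_div_of_lipschitz (μ : Measure ℝ) [IsFiniteMeasure μ] {g : ℝ → ℝ}
    {K : NNReal} (hg : LipschitzWith K g) (hgi : Integrable g μ) {E : ℝ}
    (hE : Tendsto (fun ε => ∫ x, poissonHalfPlane E ε x ∂μ) (𝓝[>] 0) atTop) :
    Tendsto (fun ε : ℝ => borelTransform μ g (E + ε * Complex.I) /
      borelTransform μ (fun _ => 1) (E + ε * Complex.I)) (𝓝[>] 0) (𝓝 (g E : ℂ)) := by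
  rw [tendsto_iff_norm_sub_tendsto_zero]
  have hz : Tendsto (fun ε => K * μ.real Set.univ / ∫ x, poissonHalfPlane E ε x ∂μ)
      (𝓝[>] 0) (𝓝 0) := hE.const_div_atTop _
  refine squeeze_zero' (Eventually.of_forall fun _ => norm_nonneg _) ?_ hz
  filter_upwards [self_mem_nhdsWithin, hE.eventually_gt_atTop 0] with ε hε hpos
  rw [Set.mem_Ioi] at hε
  have hS := im_borelTransform_one μ E hε
  have him : 0 < ((E : ℂ) + ε * Complex.I).im := by simpa using hε
  have hnorm : ∫ x, poissonHalfPlane E ε x ∂μ ≤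
      ‖borelTransform μ (fun _ => 1) (E + ε * Complex.I)‖ := by
    rw [← hS]
    exact (le_abs_self _).trans (Complex.abs_im_le_norm _)
  have hF : borelTransform μ (fun _ => 1) (E + ε * Complex.I) ≠ 0 :=
    norm_pos_iff.1 (hpos.trans_le hnorm)
  rw [div_sub' hF, norm_div]
  refine div_le_div₀ (by positivity) ?_ hpos hnorm
  have hdiff : borelTransform μ g (E + ε * Complex.I) -
      borelTransform μ (fun _ => 1) (E + ε * Complex.I) * (g E : ℂ) =
      ∫ x : ℝ, ((g x : ℂ) - g E) * ((x : ℂ) - (E + ε * Complex.I))⁻¹ ∂μ := by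
    rw [borelTransform, borelTransform, ← integral_mul_const, ← integral_sub
      (integrable_borelTransform μ hgi him)
      ((integrable_borelTransform μ (integrable_const 1) him).mul_const _)]
    refine integral_congr_ae (Eventually.of_forall fun x => ?_)
    simp only [Complex.ofReal_one, one_mul]
    ring
  rw [hdiff, mul_comm (K : ℝ), mul_comm (μ.real Set.univ)]
  refine norm_integral_le_of_norm_le_const (Eventually.of_forall fun x => ?_)
  rw [norm_mul, norm_inv, ← div_eq_mul_inv, ← Complex.ofReal_sub, Complex.norm_real]
  have h1 : |x - E| ≤ ‖(x : ℂ) - (E + ε * Complex.I)‖ := by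
    have := Complex.abs_re_le_norm ((x : ℂ) - (E + ε * Complex.I))
    simpa using this
  have h2 := hg.dist_le_mul x E
  rw [Real.dist_eq, Real.dist_eq] at h2
  rw [Real.norm_eq_abs]
  refine div_le_of_le_mul₀ (norm_nonneg _) K.coe_nonneg (h2.trans ?_)
  gcongr

lemma exists_lipschitz_lintegral_sq_sub_le (μ : Measure ℝ) [IsFiniteMeasure μ] {f : ℝ → ℝ}
    (hf : MemLp f 2 μ) {δ : ℝ} (hδ : 0 < δ) :
    ∃ g : ℝ → ℝ, (∃ K : NNReal, LipschitzWith K g) ∧ MemLp g 2 μ ∧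
      ∫⁻ x, ENNReal.ofReal ((f x - g x) ^ 2) ∂μ ≤ ENNReal.ofReal (δ ^ 2) := by
  obtain ⟨g, hgc, hgs, hg⟩ := hf.exist_eLpNorm_sub_le (by norm_num) (by norm_num) hδ
  refine ⟨g, hgs.lipschitzWith_of_hasCompactSupport hgc (by simp),
    hgs.continuous.memLp_of_hasCompactSupport hgc, ?_⟩
  have h1 := eLpNorm_nnreal_pow_eq_lintegral (μ := μ) (f := f - g) (p := 2) (by norm_num)
  have h2 : ∫⁻ x, ENNReal.ofReal ((f x - g x) ^ 2) ∂μ = eLpNorm (f - g) 2 μ ^ 2 := by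
    have h3 : eLpNorm (f - g) 2 μ ^ 2 = eLpNorm (f - g) (2 : NNReal) μ ^ ((2 : NNReal) : ℝ) := by
      norm_num
    rw [h3, h1]
    refine lintegral_congr fun x => ?_
    rw [← sq_abs, ← Real.norm_eq_abs, ENNReal.ofReal_pow (norm_nonneg _), ofReal_norm]
    norm_num
  rw [h2, ENNReal.ofReal_pow hδ.le]
  gcongr

/-- The bound for the ratio of Borel transforms by the density of a measure whose mass is
controlled in `L²`. -/
lemma exists_measure_norm_borelTransform_div_le (μ : Measure ℝ) [IsFiniteMeasure μ] [NeZero μ]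
    {N : Set ℝ} (hN : volume N = 0) : ∃ C : ℝ, ∀ r : ℝ → ℝ, MemLp r 2 μ →
      ∃ κ : Measure ℝ, IsFiniteMeasure κ ∧
        κ Set.univ ≤ ENNReal.ofReal C * ∫⁻ x, ENNReal.ofReal (r x ^ 2) ∂μ ∧
        ∀ᵐ (E : ℝ) ∂μ.restrict N, ∀ η : ℝ, 0 < η →
          κ.rnDeriv μ E < ENNReal.ofReal (η ^ 2 / (4 * (1 + 2 * E ^ 2))) →
          ∀ᶠ ε : ℝ in 𝓝[>] 0, ‖borelTransform μ r (E + ε * Complex.I) /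
            borelTransform μ (fun _ => 1) (E + ε * Complex.I)‖ ≤ η := by
  set F := borelTransform μ (fun _ => 1) with hF
  refine ⟨2 + μ.real Set.univ / ‖F Complex.I‖, fun r hr => ?_⟩
  have hr1 : Integrable r μ := hr.integrable (by norm_num)
  have hr2 : Integrable (fun x => r x ^ 2) μ := hr.integrable_sq
  have hne : ∀ z : ℂ, 0 < z.im → F z ≠ 0 := by
    intro z hz h
    have h1 := im_borelTransform_one μ z.re hz
    rw [Complex.re_add_im, ← hF, h, Complex.zero_im] at h1
    exact (integral_poissonHalfPlane_pos μ z.re hz).ne h1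
  set G : ℂ → ℂ := fun z => 2 * borelTransform μ (fun x => r x ^ 2) z -
    borelTransform μ r z ^ 2 / F z with hG
  have hkey : ∀ E ε : ℝ, 0 < ε → ‖borelTransform μ r (E + ε * Complex.I) /
      F (E + ε * Complex.I)‖ ^ 2 * ∫ x, poissonHalfPlane E ε x ∂μ ≤
      2 * (G (E + ε * Complex.I)).im := fun E ε hε => norm_sq_borelTransform_div_le μ hr E hε
  have hGd : DifferentiableOn ℂ G {z | 0 < z.im} :=
    ((differentiableOn_borelTransform μ hr2).const_mul 2).sub
      (((differentiableOn_borelTransform μ hr1).pow 2).div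
        (differentiableOn_borelTransform μ (integrable_const 1)) hne)
  have hGpos : ∀ z : ℂ, 0 < z.im → 0 ≤ (G z).im := by
    intro z hz
    have h1 := hkey z.re z.im hz
    rw [Complex.re_add_im] at h1
    have h2 := mul_nonneg (sq_nonneg ‖borelTransform μ r z / F z‖)
      (integral_poissonHalfPlane_pos μ z.re hz).le
    linarith
  obtain ⟨κ, hκ, hκP⟩ := exists_measure_im_le_integral_poissonHalfPlane hGd hGpos
  have hfin : IsFiniteMeasure κ := ⟨hκ.trans_lt ENNReal.ofReal_lt_top⟩
  refine ⟨κ, hfin, hκ.trans ?_, ?_⟩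
  · rw [← ofReal_integral_eq_lintegral_ofReal hr2 (Eventually.of_forall fun x => sq_nonneg _),
      ← ENNReal.ofReal_mul (by positivity)]
    refine ENNReal.ofReal_le_ofReal ?_
    have hI : ∀ f : ℝ → ℝ, Integrable f μ → ‖borelTransform μ f Complex.I‖ ≤ ∫ x, ‖f x‖ ∂μ := by
      intro f hf
      refine norm_integral_le_of_norm_le hf.norm (Eventually.of_forall fun x => ?_)
      rw [norm_mul, Complex.norm_real]
      refine mul_le_of_le_one_right (norm_nonneg _) ?_
      simpa using norm_inv_ofReal_sub_le one_pos (z := Complex.I) (by simp) x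
    have h1 := hI _ hr2
    have h2 := hI _ hr1
    have h3 : (∫ x, ‖r x‖ ∂μ) ^ 2 ≤ μ.real Set.univ * ∫ x, r x ^ 2 ∂μ := by
      set m := μ.real Set.univ
      set a := ∫ x, ‖r x‖ ∂μ
      have hm : 0 < m := by simp [m, measureReal_def, ENNReal.toReal_pos_iff, NeZero.pos]
      have h4 : 0 ≤ ∫ x, (m * ‖r x‖ - a) ^ 2 ∂μ := integral_nonneg fun x => sq_nonneg _
      have h5 : ∫ x, (m * ‖r x‖ - a) ^ 2 ∂μ = m ^ 2 * ∫ x, r x ^ 2 ∂μ - 2 * m * a * a + m * a ^ 2 := by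
        have h6 : ∀ x, (m * ‖r x‖ - a) ^ 2 = m ^ 2 * r x ^ 2 - 2 * m * a * ‖r x‖ + a ^ 2 := by
          intro x
          rw [sub_sq, mul_pow, Real.norm_eq_abs, sq_abs]
          ring
        have i1 : Integrable (fun x => m ^ 2 * r x ^ 2 - 2 * m * a * ‖r x‖) μ :=
          (hr2.const_mul _).sub (hr1.norm.const_mul _)
        simp_rw [h6]
        rw [integral_add i1 (integrable_const _), integral_sub (hr2.const_mul _)
          (hr1.norm.const_mul _), integral_const_mul, integral_const_mul, integral_const,
          smul_eq_mul]
      rw [h5] at h4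
      have : 0 ≤ m * (m * ∫ x, r x ^ 2 ∂μ - a ^ 2) := by linarith
      linarith [nonneg_of_mul_nonneg_right this hm]
    have hFI : 0 < ‖F Complex.I‖ := norm_pos_iff.2 (hne _ (by simp))
    calc (G Complex.I).im ≤ ‖G Complex.I‖ := (le_abs_self _).trans (Complex.abs_im_le_norm _)
      _ ≤ 2 * ‖borelTransform μ (fun x => r x ^ 2) Complex.I‖ +
          ‖borelTransform μ r Complex.I‖ ^ 2 / ‖F Complex.I‖ := by
        simp only [hG]
        refine (norm_sub_le _ _).trans_eq ?_
        simp
      _ ≤ 2 * ∫ x, ‖r x ^ 2‖ ∂μ + (∫ x, ‖r x‖ ∂μ) ^ 2 / ‖F Complex.I‖ := by gcongr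
      _ ≤ 2 * ∫ x, r x ^ 2 ∂μ + (μ.real Set.univ * ∫ x, r x ^ 2 ∂μ) / ‖F Complex.I‖ := by
        simp only [norm_pow, Real.norm_eq_abs, sq_abs] at h3 ⊢
        gcongr
      _ = _ := by ring
  · filter_upwards [ae_eventually_integral_poissonHalfPlane_le κ μ hN,
      ae_tendsto_integral_poissonHalfPlane_atTop μ hN] with E hE htop η hη hlt
    have hlarge := htop.eventually_ge_atTop (8 * (G Complex.I).im / η ^ 2)
    filter_upwards [hE _ hlt, hlarge, self_mem_nhdsWithin, Ioo_mem_nhdsGT zero_lt_one]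
      with ε h1 h2 hε hε1
    rw [Set.mem_Ioi] at hε
    have hpos := integral_poissonHalfPlane_pos μ E hε
    have h3 := hkey E ε hε
    have h4 := hκP E ε hε
    have hGI := hGpos Complex.I (by simp)
    rw [div_le_iff₀ (by positivity)] at h2
    have h5 : (1 + 2 * E ^ 2) * ∫ x, poissonHalfPlane E ε x ∂κ ≤
        η ^ 2 / 4 * ∫ x, poissonHalfPlane E ε x ∂μ := by
      calc _ ≤ (1 + 2 * E ^ 2) * (η ^ 2 / (4 * (1 + 2 * E ^ 2)) *
            ∫ x, poissonHalfPlane E ε x ∂μ) := by gcongr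
        _ = _ := by field_simp
    have h6 : 2 * ε * (G Complex.I).im ≤ 2 * (G Complex.I).im := by nlinarith [hε1.2]
    have h7 : ‖borelTransform μ r (E + ε * Complex.I) / F (E + ε * Complex.I)‖ ^ 2 *
        ∫ x, poissonHalfPlane E ε x ∂μ ≤ η ^ 2 * ∫ x, poissonHalfPlane E ε x ∂μ := by linarith
    exact (sq_le_sq₀ (norm_nonneg _) hη.le).1 (le_of_mul_le_mul_right h7 hpos)

/-- **Poltoratski's theorem** for square-integrable densities. -/
lemma ae_tendsto_borelTransform_div (μ : Measure ℝ) [IsFiniteMeasure μ] {f : ℝ → ℝ}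
    (hf : MemLp f 2 μ) (hfm : Measurable f) {N : Set ℝ} (hN : volume N = 0) :
    ∀ᵐ (E : ℝ) ∂μ.restrict N,
      Tendsto (fun ε : ℝ => borelTransform μ f (E + ε * Complex.I) /
        borelTransform μ (fun _ => 1) (E + ε * Complex.I)) (𝓝[>] 0) (𝓝 (f E : ℂ)) := by
  rcases eq_zero_or_neZero μ with rfl | hμ
  · simp
  obtain ⟨C, hC⟩ := exists_measure_norm_borelTransform_div_le μ hN
  have happrox : ∀ n : ℕ, ∃ g : ℝ → ℝ, (∃ K : NNReal, LipschitzWith K g) ∧ MemLp g 2 μ ∧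
      ∫⁻ x, ENNReal.ofReal ((f x - g x) ^ 2) ∂μ ≤ ENNReal.ofReal (((1 / 2 : ℝ) ^ n) ^ 2) :=
    fun n => exists_lipschitz_lintegral_sq_sub_le μ hf (by positivity)
  choose g hgK hg hfg using happrox
  choose κ hκfin hκ hκae using fun n => hC (f - g n) (hf.sub (hg n))
  have hgm : ∀ n, Measurable (g n) := fun n => (hgK n).choose_spec.continuous.measurable
  set S : ℕ → ℝ → ℝ≥0∞ := fun n x =>
    ENNReal.ofReal ((f x - g n x) ^ 2) + (κ n).rnDeriv μ x with hS
  have hSm : ∀ n, Measurable (S n) := fun n => by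
    have := hgm n
    exact Measurable.add (by fun_prop) (Measure.measurable_rnDeriv _ _)
  have hsum : ∑' n, ∫⁻ x, S n x ∂μ ≠ ∞ := by
    have hle : ∀ n, ∫⁻ x, S n x ∂μ ≤
        (1 + ENNReal.ofReal C) * ENNReal.ofReal (((1 / 2 : ℝ) ^ n) ^ 2) := by
      intro n
      have := hgm n
      simp only [hS]
      rw [lintegral_add_left (by fun_prop), add_mul, one_mul]
      gcongr
      · exact hfg n
      · refine (Measure.lintegral_rnDeriv_le).trans ((hκ n).trans ?_)
        gcongr
        exact hfg n
    refine ne_top_of_le_ne_top ?_ (ENNReal.tsum_le_tsum hle)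
    rw [ENNReal.tsum_mul_left]
    refine ENNReal.mul_ne_top (by simp) ?_
    have hs : Summable fun n : ℕ => ((1 / 2 : ℝ) ^ n) ^ 2 := by
      simp_rw [← pow_mul, mul_comm _ 2, pow_mul]
      exact summable_geometric_of_lt_one (by norm_num) (by norm_num)
    exact hs.tsum_ofReal_ne_top
  rw [← lintegral_tsum fun n => (hSm n).aemeasurable] at hsum
  have hfinite := ae_lt_top (Measurable.tsum hSm) hsum
  filter_upwards [ae_restrict_of_ae hfinite, ae_all_iff.2 hκae,
    ae_tendsto_integral_poissonHalfPlane_atTop μ hN] with E hE hκE htop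
  have hS0 : Tendsto (fun n => S n E) atTop (𝓝 0) :=
    ENNReal.tendsto_atTop_zero_of_tsum_ne_top hE.ne
  rw [Metric.tendsto_nhds]
  intro η hη
  have hη3 : 0 < η / 3 := by positivity
  have hpos : 0 < min ((η / 3) ^ 2 / (4 * (1 + 2 * E ^ 2))) ((η / 3) ^ 2) := by positivity
  obtain ⟨n, hn⟩ := (hS0.eventually (gt_mem_nhds (ENNReal.ofReal_pos.2 hpos))).exists
  have h1 : (κ n).rnDeriv μ E < ENNReal.ofReal ((η / 3) ^ 2 / (4 * (1 + 2 * E ^ 2))) :=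
    (le_add_self.trans_lt hn).trans_le (ENNReal.ofReal_le_ofReal (min_le_left _ _))
  have h2 : |f E - g n E| < η / 3 := by
    have h3 : ENNReal.ofReal ((f E - g n E) ^ 2) < ENNReal.ofReal ((η / 3) ^ 2) :=
      (le_self_add.trans_lt hn).trans_le (ENNReal.ofReal_le_ofReal (min_le_right _ _))
    rw [ENNReal.ofReal_lt_ofReal_iff (by positivity)] at h3
    exact abs_lt_of_sq_lt_sq h3 hη3.le
  have h4 := tendsto_borelTransform_div_of_lipschitz μ (hgK n).choose_spec
    ((hg n).integrable (by norm_num)) htop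
  filter_upwards [hκE n (η / 3) hη3 h1, Metric.tendsto_nhds.1 h4 (η / 3) hη3,
    self_mem_nhdsWithin] with ε h5 h6 hε
  have him : 0 < ((E : ℂ) + ε * Complex.I).im := by simpa using hε
  have hadd : borelTransform μ f (E + ε * Complex.I) =
      borelTransform μ (f - g n) (E + ε * Complex.I) +
        borelTransform μ (g n) (E + ε * Complex.I) := by
    rw [borelTransform, borelTransform, borelTransform, ← integral_add
      (integrable_borelTransform μ ((hf.sub (hg n)).integrable (by norm_num)) him)
      (integrable_borelTransform μ ((hg n).integrable (by norm_num)) him)]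
    refine integral_congr_ae (Eventually.of_forall fun x => ?_)
    simp only [Pi.sub_apply, Complex.ofReal_sub]
    ring
  rw [dist_eq_norm] at h6 ⊢
  rw [hadd, add_div]
  set a := borelTransform μ (f - g n) (E + ε * Complex.I) /
    borelTransform μ (fun _ => 1) (E + ε * Complex.I)
  set b := borelTransform μ (g n) (E + ε * Complex.I) /
    borelTransform μ (fun _ => 1) (E + ε * Complex.I)
  have h7 : ‖(f E : ℂ) - g n E‖ < η / 3 := by
    rwa [← Complex.ofReal_sub, Complex.norm_real]
  calc ‖a + b - f E‖ = ‖a + (b - g n E) - (f E - g n E)‖ := by congr 1; ring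
    _ ≤ ‖a‖ + ‖b - g n E‖ + ‖(f E : ℂ) - g n E‖ :=
      (norm_sub_le _ _).trans (by gcongr; exact norm_add_le _ _)
    _ < η := by linarith

lemma borelTransform_rnDeriv {ρ τ : Measure ℝ} [SigmaFinite ρ] [SigmaFinite τ] (h : ρ ≪ τ)
    (z : ℂ) : borelTransform τ (fun x => (ρ.rnDeriv τ x).toReal) z =
      ∫ x : ℝ, ((x : ℂ) - z)⁻¹ ∂ρ := by
  rw [← integral_rnDeriv_smul h]
  simp [borelTransform, Complex.real_smul]

lemma memLp_toReal_rnDeriv_of_le {ρ τ : Measure ℝ} [IsFiniteMeasure ρ] [IsFiniteMeasure τ]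
    (h : ρ ≤ τ) : MemLp (fun x => (ρ.rnDeriv τ x).toReal) 2 τ := by
  refine MemLp.of_bound (Measure.measurable_rnDeriv _ _).ennreal_toReal.aestronglyMeasurable 1 ?_
  filter_upwards [Measure.rnDeriv_le_one_of_le h] with x hx
  rw [Real.norm_of_nonneg ENNReal.toReal_nonneg]
  exact ENNReal.toReal_le_of_le_ofReal zero_le_one (by simpa using hx)

/-- Poltoratski's theorem. For finite positive Borel measures `ρ ≪ σ` on `ℝ`,
with Borel transforms `M_ρ`, `M_σ`, for `σ_s`-a.e. `E` (where `σ_s` is the part of `σ`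
singular w.r.t. Lebesgue measure), the ratio `M_ρ(E + iε) / M_σ(E + iε)` converges as
`ε → 0⁺` to the Radon–Nikodym derivative `(dρ/dσ)(E)`. -/
theorem stmt_1 (ρ σ : Measure ℝ) [IsFiniteMeasure ρ] [IsFiniteMeasure σ] (hac : ρ ≪ σ)
    (Mρ Mσ : ℂ → ℂ)
    (hMρ : ∀ z : ℂ, Mρ z = ∫ x : ℝ, ((x : ℂ) - z)⁻¹ ∂ρ)
    (hMσ : ∀ z : ℂ, Mσ z = ∫ x : ℝ, ((x : ℂ) - z)⁻¹ ∂σ) :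
    ∀ᵐ (E : ℝ) ∂(σ.singularPart volume),
      Tendsto (fun ε : ℝ => Mρ ((E : ℂ) + ε * Complex.I) / Mσ ((E : ℂ) + ε * Complex.I))
        (nhdsWithin 0 (Set.Ioi 0)) (nhds (((ρ.rnDeriv σ E).toReal : ℂ))) := by
  obtain ⟨A, hA, hσA, hvA⟩ := Measure.mutuallySingular_singularPart σ volume
  set τ := ρ + σ with hτ
  have hρτ : ρ ≤ τ := Measure.le_add_right le_rfl
  have hστ : σ ≤ τ := Measure.le_add_left le_rfl
  have hσs : σ.singularPart volume ≤ σ.restrict Aᶜ := by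
    rw [← Measure.restrict_eq_self_of_ae_mem (s := Aᶜ) (μ := σ.singularPart volume)
      (by rw [ae_iff]; simpa using hσA)]
    exact Measure.restrict_mono le_rfl (Measure.singularPart_le σ volume)
  have hρlim := ae_tendsto_borelTransform_div τ (memLp_toReal_rnDeriv_of_le hρτ)
    (Measure.measurable_rnDeriv _ _).ennreal_toReal hvA
  have hσlim := ae_tendsto_borelTransform_div τ (memLp_toReal_rnDeriv_of_le hστ)
    (Measure.measurable_rnDeriv _ _).ennreal_toReal hvA
  have hle := Measure.restrict_mono (le_refl Aᶜ) hστ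
  have hστ' := hστ.absolutelyContinuous
  refine ae_mono hσs ?_
  filter_upwards [ae_mono hle hρlim, ae_mono hle hσlim,
    ae_restrict_of_ae (Measure.rnDeriv_pos hστ'),
    ae_restrict_of_ae (hστ'.ae_le (σ.rnDeriv_lt_top τ)),
    ae_restrict_of_ae (hστ'.ae_le (Measure.rnDeriv_mul_rnDeriv (κ := τ) hac)),
    ae_mono hle (ae_tendsto_integral_poissonHalfPlane_atTop τ hvA)]
    with E hρE hσE hpos hfin hchain htop
  have hne : (σ.rnDeriv τ E).toReal ≠ 0 := (ENNReal.toReal_pos hpos.ne' hfin.ne).ne'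
  have hlim := hρE.div hσE (Complex.ofReal_ne_zero.2 hne)
  have hval : ((ρ.rnDeriv τ E).toReal : ℂ) / (σ.rnDeriv τ E).toReal = (ρ.rnDeriv σ E).toReal := by
    rw [← hchain, Pi.mul_apply, ENNReal.toReal_mul, Complex.ofReal_mul,
      mul_div_cancel_right₀ _ (Complex.ofReal_ne_zero.2 hne)]
  rw [hval] at hlim
  refine hlim.congr' ?_
  filter_upwards [self_mem_nhdsWithin, htop.eventually_gt_atTop 0] with ε hε hP
  have hF : borelTransform τ (fun _ => 1) (E + ε * Complex.I) ≠ 0 := by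
    intro h
    have h1 := im_borelTransform_one τ E hε
    rw [h, Complex.zero_im] at h1
    exact hP.ne h1
  rw [hMρ, hMσ, ← borelTransform_rnDeriv hρτ.absolutelyContinuous,
    ← borelTransform_rnDeriv hστ', Pi.div_apply, div_div_div_cancel_right₀ hF]
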